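/- arXiv:2107.01454 — 3 statements merged into one kernel-verified Lean document; each statement's English description precedes it below -/
import Mathlib

section
/- Let K : ℝ^N → ℝ^N be continuously differentiable with a fixed point q* = K(q*), and suppose every eigenvalue λ ∈ ℂ of the Jacobian matrix J = K'(q*) satisfies Re(λ) < 1. Then there exists θ_max > 0 such that for every θ ∈ (0, θ_max) there exist a Hermitian positive definite matrix P ∈ ℂ^{N×N} of the form P = U D U* with U unitary and D a positive definite diagonal matrix, a constant c ∈ (0,1), and a radius ρ > 0, such that the damped map K_θ(q) = (1−θ)q + θK(q) is locally contractive in the norm ‖x‖_P = (x* P x)^{1/2}: for all x, y ∈ ℝ^N with ‖x − q*‖_P ≤ ρ and ‖y − q*‖_P ≤ ρ one has ‖K_θ(x) − K_θ(y)‖_P ≤ c ‖x − y‖_P. -/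
open Matrix
open scoped ComplexOrder

/-- The norm `‖x‖_P = (x* P x)^{1/2}` associated with a Hermitian positive definite matrix. -/
noncomputable def pNorm {N : ℕ} (P : Matrix (Fin N) (Fin N) ℂ) (x : Fin N → ℂ) : ℝ :=
  Real.sqrt ((star x ⬝ᵥ P.mulVec x).re)

open Filter Topology
open scoped Matrix.Norms.L2Operator NNReal ENNReal MatrixOrder

/-- In a complex Banach algebra, an element whose spectrum lies in the open unit disc has a
positive power of norm less than one. -/
lemma exists_norm_pow_lt_one {A : Type*} [NormedRing A] [NormedAlgebra ℂ A] [CompleteSpace A]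
    (a : A) (h : ∀ μ ∈ spectrum ℂ a, ‖μ‖ < 1) : ∃ k : ℕ, 0 < k ∧ ‖a ^ k‖ < 1 := by
  rcases subsingleton_or_nontrivial A with hA | hA
  · exact ⟨1, one_pos, by simp [Subsingleton.elim a 0]⟩
  · have hr : spectralRadius ℂ a < ((1 : ℝ≥0) : ℝ≥0∞) :=
      spectrum.spectralRadius_lt_of_forall_lt a fun μ hμ => by
        exact_mod_cast h μ hμ
    obtain ⟨k, hk, hk0⟩ := (((spectrum.pow_nnnorm_pow_one_div_tendsto_nhds_spectralRadius a)
      |>.eventually_lt_const hr).and (eventually_gt_atTop 0)).exists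
    refine ⟨k, hk0, ?_⟩
    have hk1 : (‖a ^ k‖₊ : ℝ≥0∞) < 1 := by
      by_contra! hcon
      exact absurd hk (not_lt.2 (ENNReal.one_le_rpow hcon (by positivity)))
    exact_mod_cast hk1

/-- The weighted norm is the Euclidean norm after an injective linear map. -/
lemma Matrix.PosDef.exists_pNorm_eq {N : ℕ} {P : Matrix (Fin N) (Fin N) ℂ} (hP : P.PosDef) :
    ∃ L : (Fin N → ℂ) →ₗ[ℂ] EuclideanSpace ℂ (Fin N),
      Function.Injective L ∧ ∀ x, pNorm P x = ‖L x‖ := by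
  obtain ⟨B, hB⟩ := CStarAlgebra.nonneg_iff_eq_star_mul_self.1 hP.posSemidef.nonneg
  have hq : ∀ x, star x ⬝ᵥ P *ᵥ x = star (B *ᵥ x) ⬝ᵥ (B *ᵥ x) := fun x => by
    rw [hB, star_mulVec, ← mulVec_mulVec, dotProduct_mulVec, star_eq_conjTranspose]
  refine ⟨(WithLp.linearEquiv 2 ℂ (Fin N → ℂ)).symm.toLinearMap ∘ₗ B.mulVecLin, ?_, fun x => ?_⟩
  · refine (injective_iff_map_eq_zero _).2 fun x hx => ?_
    by_contra hx0
    have hBx : B *ᵥ x = 0 := by simpa using hx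
    have := hP.dotProduct_mulVec_pos hx0
    simp [hq, hBx] at this
  · rw [pNorm, hq, EuclideanSpace.norm_eq]
    congr 1
    simp [dotProduct, Complex.mul_re, Complex.sq_norm, Complex.normSq_apply]

lemma re_star_dotProduct_conjTranspose_mul_self {N : ℕ} (B : Matrix (Fin N) (Fin N) ℂ)
    (x : Fin N → ℂ) :
    (star x ⬝ᵥ (Bᴴ * B) *ᵥ x).re = ‖WithLp.toLp 2 (B *ᵥ x)‖ ^ 2 := by
  rw [← mulVec_mulVec, dotProduct_mulVec, ← star_mulVec, EuclideanSpace.norm_sq_eq]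
  simp [dotProduct, Complex.mul_re, Complex.sq_norm, Complex.normSq_apply]

/-- A matrix whose spectrum lies in the open unit disc is a strict contraction in the norm of some
positive definite matrix. -/
lemma exists_posDef_pNorm_mulVec_le {N : ℕ} (M : Matrix (Fin N) (Fin N) ℂ)
    (h : ∀ μ ∈ spectrum ℂ M, ‖μ‖ < 1) :
    ∃ P : Matrix (Fin N) (Fin N) ℂ, P.PosDef ∧ ∃ c ∈ Set.Ioo (0 : ℝ) 1,
      ∀ x, pNorm P (M *ᵥ x) ≤ c * pNorm P x := by
  obtain ⟨k, hk0, hk⟩ := exists_norm_pow_lt_one M h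
  set P : Matrix (Fin N) (Fin N) ℂ := ∑ j ∈ Finset.range k, (M ^ j)ᴴ * M ^ j with hPdef
  set δ : ℝ := 1 - ‖M ^ k‖ ^ 2 with hδ
  set C : ℝ := 2 + ∑ j ∈ Finset.range k, ‖M ^ j‖ ^ 2 with hC
  have hδ0 : 0 < δ := by nlinarith [norm_nonneg (M ^ k)]
  have hδ1 : δ ≤ 1 := by nlinarith [norm_nonneg (M ^ k)]
  have hC2 : 2 ≤ C := le_add_of_nonneg_right (Finset.sum_nonneg fun _ _ => by positivity)
  have hPpos : P.PosDef := by
    obtain ⟨m, rfl⟩ := Nat.exists_eq_succ_of_ne_zero hk0.ne'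
    rw [hPdef, Finset.sum_range_succ']
    refine PosDef.posSemidef_add (posSemidef_sum _ fun _ _ =>
      posSemidef_conjTranspose_mul_self _) ?_
    simpa using (PosDef.one : (1 : Matrix (Fin N) (Fin N) ℂ).PosDef)
  have hq : ∀ x, (star x ⬝ᵥ P *ᵥ x).re =
      ∑ j ∈ Finset.range k, ‖WithLp.toLp 2 (M ^ j *ᵥ x)‖ ^ 2 := fun x => by
    rw [hPdef, sum_mulVec, dotProduct_sum, Complex.re_sum]
    exact Finset.sum_congr rfl fun j _ => re_star_dotProduct_conjTranspose_mul_self _ _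
  have hle : ∀ j x, ‖WithLp.toLp 2 (M ^ j *ᵥ x)‖ ^ 2 ≤ ‖M ^ j‖ ^ 2 * ‖WithLp.toLp 2 x‖ ^ 2 :=
    fun j x => by
      rw [← mul_pow]
      exact pow_le_pow_left₀ (norm_nonneg _) (l2_opNorm_mulVec (M ^ j) (WithLp.toLp 2 x)) 2
  have hbound : ∀ x, (star x ⬝ᵥ P *ᵥ x).re ≤ C * ‖WithLp.toLp 2 x‖ ^ 2 := fun x => by
    rw [hq, hC, add_mul, Finset.sum_mul]
    exact (Finset.sum_le_sum fun j _ => hle j x).trans (le_add_of_nonneg_left (by positivity))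
  have hstep : ∀ x, (star (M *ᵥ x) ⬝ᵥ P *ᵥ (M *ᵥ x)).re ≤
      (star x ⬝ᵥ P *ᵥ x).re - δ * ‖WithLp.toLp 2 x‖ ^ 2 := fun x => by
    have hshift : (star (M *ᵥ x) ⬝ᵥ P *ᵥ (M *ᵥ x)).re + ‖WithLp.toLp 2 x‖ ^ 2 =
        (star x ⬝ᵥ P *ᵥ x).re + ‖WithLp.toLp 2 (M ^ k *ᵥ x)‖ ^ 2 := by
      rw [hq, hq, ← Finset.sum_range_succ (fun j => ‖WithLp.toLp 2 (M ^ j *ᵥ x)‖ ^ 2),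
        Finset.sum_range_succ']
      simp [mulVec_mulVec, pow_succ]
    have := hle k x
    rw [hδ]
    linarith
  have hδC : δ / C ≤ 1 / 2 := by
    rw [div_le_div_iff₀ (by linarith) two_pos]; linarith
  have hδC0 : 0 < δ / C := div_pos hδ0 (by linarith)
  refine ⟨P, hPpos, √(1 - δ / C), ⟨Real.sqrt_pos.2 (by linarith), ?_⟩, fun x => ?_⟩
  · rw [Real.sqrt_lt' one_pos]; linarith
  · rw [pNorm, pNorm, ← Real.sqrt_mul (by linarith)]
    refine Real.sqrt_le_sqrt ((hstep x).trans ?_)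
    have := mul_le_mul_of_nonneg_left (hbound x) hδC0.le
    rw [← mul_assoc, div_mul_cancel₀ _ (by linarith : C ≠ 0)] at this
    linarith

/-- A map whose strict derivative at `q` contracts a norm equivalent to the ambient one contracts
that norm near `q`. -/
lemma HasStrictFDerivAt.exists_seminorm_contraction {E : Type*} [NormedAddCommGroup E]
    [NormedSpace ℝ E] (p : Seminorm ℝ E) {a b c : ℝ} (ha : 0 ≤ a) (hb : 0 ≤ b)
    (hpa : ∀ v, p v ≤ a * ‖v‖) (hpb : ∀ v, ‖v‖ ≤ b * p v) {F : E → E} {F' : E →L[ℝ] E} {q : E}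
    (hF : HasStrictFDerivAt F F' q) (hc : c ∈ Set.Ioo (0 : ℝ) 1) (hF' : ∀ v, p (F' v) ≤ c * p v) :
    ∃ c' ∈ Set.Ioo (0 : ℝ) 1, ∃ ρ > (0 : ℝ), ∀ x y, p (x - q) ≤ ρ → p (y - q) ≤ ρ →
      p (F x - F y) ≤ c' * p (x - y) := by
  obtain ⟨hc0, hc1⟩ := hc
  have hab : 0 ≤ a * b := mul_nonneg ha hb
  set ε : ℝ := (1 - c) / (2 * (a * b + 1)) with hε
  have hε0 : 0 < ε := div_pos (by linarith) (by linarith)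
  have hεab : a * b * ε ≤ (1 - c) / 2 := by
    rw [hε, mul_div_assoc', div_le_div_iff₀ (by linarith) two_pos]
    nlinarith
  obtain ⟨s, hs, hsF⟩ := hF.approximates_deriv_on_nhds (c := ⟨ε, hε0.le⟩) (Or.inr hε0)
  obtain ⟨r, hr0, hr⟩ := Metric.mem_nhds_iff.1 hs
  have hmem : ∀ x, p (x - q) ≤ r / (b + 1) → x ∈ s := fun x hx => hr <| by
    rw [Metric.mem_ball, dist_eq_norm]
    calc ‖x - q‖ ≤ b * p (x - q) := hpb _
      _ ≤ b * (r / (b + 1)) := by gcongr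
      _ < r := by rw [mul_div_assoc', div_lt_iff₀ (by linarith)]; nlinarith
  refine ⟨(1 + c) / 2, ⟨by linarith, by linarith⟩, r / (b + 1), by positivity,
    fun x y hx hy => ?_⟩
  have happ : ‖F x - F y - F' (x - y)‖ ≤ ε * ‖x - y‖ := hsF x (hmem x hx) y (hmem y hy)
  calc p (F x - F y) = p ((F x - F y - F' (x - y)) + F' (x - y)) := by rw [sub_add_cancel]
    _ ≤ p (F x - F y - F' (x - y)) + p (F' (x - y)) := map_add_le_add _ _ _
    _ ≤ a * (ε * (b * p (x - y))) + c * p (x - y) := by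
        gcongr
        · exact (hpa _).trans (by gcongr; exact happ.trans (by gcongr; exact hpb _))
        · exact hF' _
    _ = (a * b * ε + c) * p (x - y) := by ring
    _ ≤ (1 + c) / 2 * p (x - y) := by
        gcongr
        linarith

/-- If every point of the spectrum has real part less than one, the affine combinations
`(1 - θ) + θ A` have spectrum in the open unit disc for all small `θ > 0`. -/
lemma Matrix.exists_forall_spectrum_damped_norm_lt_one {N : ℕ} (A : Matrix (Fin N) (Fin N) ℂ)
    (h : ∀ lam ∈ spectrum ℂ A, lam.re < 1) :
    ∃ θmax > (0 : ℝ), ∀ θ ∈ Set.Ioo (0 : ℝ) θmax,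
      ∀ μ ∈ spectrum ℂ ((1 - (θ : ℂ)) • (1 : Matrix (Fin N) (Fin N) ℂ) + (θ : ℂ) • A),
        ‖μ‖ < 1 := by
  have hev : ∀ᶠ θ : ℝ in 𝓝[>] 0, ∀ lam ∈ spectrum ℂ A,
      θ * Complex.normSq (lam - 1) < 2 * (1 - lam.re) := by
    refine ((Matrix.finite_spectrum A).eventually_all).2 fun lam hlam => nhdsWithin_le_nhds ?_
    have ht : Tendsto (fun θ : ℝ => θ * Complex.normSq (lam - 1)) (𝓝 0) (𝓝 0) := by
      exact Continuous.tendsto' (by fun_prop) _ _ (zero_mul _)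
    exact ht.eventually_lt_const (by linarith [h lam hlam])
  obtain ⟨θmax, hθmax, hsub⟩ := mem_nhdsGT_iff_exists_Ioo_subset.1 hev
  refine ⟨θmax, hθmax, fun θ hθ μ hμ => ?_⟩
  have hθ0 : (θ : ℂ) ≠ 0 := by exact_mod_cast hθ.1.ne'
  set lam : ℂ := (μ - (1 - θ)) / θ with hlam
  have hμeq : μ = 1 + θ * (lam - 1) := by rw [hlam]; field_simp; ring
  have hmem : lam ∈ spectrum ℂ A := by
    rw [spectrum.mem_iff] at hμ ⊢
    contrapose! hμ
    have heq : algebraMap ℂ (Matrix (Fin N) (Fin N) ℂ) μ - ((1 - (θ : ℂ)) • 1 + (θ : ℂ) • A) =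
        Units.mk0 (θ : ℂ) hθ0 • (algebraMap ℂ (Matrix (Fin N) (Fin N) ℂ) lam - A) := by
      rw [Units.smul_mk0, Algebra.algebraMap_eq_smul_one, Algebra.algebraMap_eq_smul_one, hμeq]
      module
    rw [heq]
    exact (isUnit_smul_iff _ _).2 hμ
  have hlt := hsub hθ lam hmem
  have hsq : ‖μ‖ ^ 2 < 1 := by
    rw [Complex.sq_norm, hμeq, Complex.normSq_apply]
    rw [Complex.normSq_apply] at hlt
    simp at hlt ⊢
    nlinarith [mul_lt_mul_of_pos_left hlt hθ.1]
  exact (sq_lt_one_iff₀ (norm_nonneg _)).1 hsq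

/-- If `K : ℝ^N → ℝ^N` is continuously differentiable with fixed point `q*` and
every eigenvalue of the Jacobian `J = K'(q*)` (as a complex matrix) has real part `< 1`, then
there is `θmax > 0` such that for every `θ ∈ (0, θmax)` there are a unitary `U`, a positive
definite diagonal `D`, `P = U D U*` Hermitian positive definite, a constant `c ∈ (0,1)` and a
radius `ρ > 0` such that the damped map `K_θ(q) = (1-θ)q + θK(q)` is a local contraction in the
norm `‖·‖_P` on the `P`-ball of radius `ρ` around `q*`. -/
theorem stmt_4 {N : ℕ}
    (K : (Fin N → ℝ) → (Fin N → ℝ)) (qstar : Fin N → ℝ)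
    (hK : ContDiff ℝ 1 K) (hfix : K qstar = qstar)
    (J : Matrix (Fin N) (Fin N) ℝ)
    (hJ : J = LinearMap.toMatrix' (fderiv ℝ K qstar).toLinearMap)
    (heig : ∀ lam ∈ spectrum ℂ (J.map (algebraMap ℝ ℂ)), lam.re < 1) :
    ∃ θmax > (0 : ℝ), ∀ θ ∈ Set.Ioo (0 : ℝ) θmax,
      ∃ U D P : Matrix (Fin N) (Fin N) ℂ,
        U ∈ Matrix.unitaryGroup (Fin N) ℂ ∧
        D.IsDiag ∧ D.PosDef ∧
        P = U * D * Uᴴ ∧ P.IsHermitian ∧ P.PosDef ∧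
        ∃ c ∈ Set.Ioo (0 : ℝ) 1, ∃ ρ > (0 : ℝ),
          ∀ x y : Fin N → ℝ,
            pNorm P (fun i => (x i : ℂ) - (qstar i : ℂ)) ≤ ρ →
            pNorm P (fun i => (y i : ℂ) - (qstar i : ℂ)) ≤ ρ →
            pNorm P (fun i =>
                ((((1 - θ) • x + θ • K x) i : ℝ) : ℂ) - (((1 - θ) • y + θ • K y) i : ℝ)) ≤
              c * pNorm P (fun i => (x i : ℂ) - (y i : ℂ)) := by
  obtain ⟨θmax, hθmax, hspec⟩ :=
    Matrix.exists_forall_spectrum_damped_norm_lt_one (J.map (algebraMap ℝ ℂ)) heig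
  refine ⟨θmax, hθmax, fun θ hθ => ?_⟩
  obtain ⟨P, hP, c, hc, hcP⟩ := exists_posDef_pNorm_mulVec_le _ (hspec θ hθ)
  refine ⟨hP.isHermitian.eigenvectorUnitary,
    diagonal (RCLike.ofReal ∘ hP.isHermitian.eigenvalues), P,
    hP.isHermitian.eigenvectorUnitary.2, isDiag_diagonal _,
    PosDef.diagonal fun i => by simpa using hP.eigenvalues_pos i,
    by simpa [Unitary.conjStarAlgAut_apply, star_eq_conjTranspose]
      using hP.isHermitian.spectral_theorem,
    hP.isHermitian, hP, ?_⟩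
  obtain ⟨L, hLinj, hL⟩ := hP.exists_pNorm_eq
  let ι : (Fin N → ℝ) →ₗ[ℝ] (Fin N → ℂ) := Complex.ofRealCLM.toLinearMap.compLeft (Fin N)
  have hι : ∀ v, ‖ι v‖ = ‖v‖ := fun v => by
    simp [ι, Pi.norm_def, LinearMap.compLeft, Function.comp_def]
  let p : Seminorm ℝ (Fin N → ℝ) :=
    (normSeminorm ℝ (EuclideanSpace ℂ (Fin N))).comp (L.restrictScalars ℝ ∘ₗ ι)
  have hp : ∀ v, p v = pNorm P (ι v) := fun v => (hL _).symm
  obtain ⟨b, -, hb⟩ := L.exists_antilipschitzWith (LinearMap.ker_eq_bot.2 hLinj)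
  have hpb : ∀ v, ‖v‖ ≤ b * p v := fun v => by
    rw [← hι, hp, hL]
    simpa using hb.le_mul_dist (ι v) 0
  have hpa : ∀ v, p v ≤ ‖L.toContinuousLinearMap‖ * ‖v‖ := fun v => by
    rw [← hι, hp, hL]
    exact L.toContinuousLinearMap.le_opNorm (ι v)
  have hKd : HasStrictFDerivAt K (fderiv ℝ K qstar) qstar :=
    hK.contDiffAt.hasStrictFDerivAt one_ne_zero
  have hF : HasStrictFDerivAt (fun x => (1 - θ) • x + θ • K x)
      ((1 - θ) • ContinuousLinearMap.id ℝ (Fin N → ℝ) + θ • fderiv ℝ K qstar) qstar :=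
    ((hasStrictFDerivAt_id qstar).const_smul (1 - θ)).add (hKd.const_smul θ)
  have hF' : ∀ v, p (((1 - θ) • ContinuousLinearMap.id ℝ (Fin N → ℝ) +
      θ • fderiv ℝ K qstar) v) ≤ c * p v := fun v => by
    have hJv : fderiv ℝ K qstar v = J *ᵥ v := by
      rw [hJ, LinearMap.toMatrix'_mulVec]; rfl
    have hιJ : ι (J *ᵥ v) = J.map (algebraMap ℝ ℂ) *ᵥ ι v :=
      funext fun i => RingHom.map_mulVec (algebraMap ℝ ℂ) J v i
    have hMv : ι (((1 - θ) • ContinuousLinearMap.id ℝ (Fin N → ℝ) + θ • fderiv ℝ K qstar) v) =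
        ((1 - (θ : ℂ)) • (1 : Matrix (Fin N) (Fin N) ℂ) +
          (θ : ℂ) • J.map (algebraMap ℝ ℂ)) *ᵥ ι v := by
      rw [add_mulVec, smul_mulVec, smul_mulVec, one_mulVec, ← hιJ, ← hJv]
      ext i
      simp [ι]
    rw [hp, hp, hMv]
    exact hcP _
  obtain ⟨c', hc', ρ, hρ, hcontr⟩ :=
    hF.exists_seminorm_contraction p (norm_nonneg _) b.2 hpa hpb hc hF'
  have hsub : ∀ x y : Fin N → ℝ, pNorm P (fun i => (x i : ℂ) - (y i : ℂ)) = p (x - y) :=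
    fun x y => by
      rw [hp]
      congr 1
      ext i
      simp [ι]
  refine ⟨c', hc', ρ, hρ, fun x y hx hy => ?_⟩
  rw [hsub] at hx hy ⊢
  rw [hsub]
  exact hcontr x y hx hy
end

section
/- Let S ∈ ℝ^{M×M} be symmetric positive definite with factorization S = LLᵀ, L invertible, let H ∈ ℝ^{M×M} be symmetric, and set A = L⁻¹ H L⁻ᵀ. Let (ε_i, c_i), i = 1,…,M, solve the generalized eigenvalue problem H c_i = ε_i S c_i, normalized so that the vectors Lᵀc_i, i = 1,…,M, form an orthonormal basis of ℝ^M. Let f : ℝ → ℝ, and define f(A) = Σ_{i=1}^M f(ε_i) (Lᵀc_i)(Lᵀc_i)ᵀ. Then for any subset α ⊆ {1,…,M}, writing E_α for the M×|α| matrix whose columns are the standard basis vectors indexed by α and I_α = E_α E_αᵀ, the Mulliken charge satisfies (1/2) Σ_{i=1}^M f(ε_i) ( c_iᵀ I_α S c_i + c_iᵀ S I_α c_i ) = tr( E_αᵀ L f(A) L⁻¹ E_α ). -/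
open Matrix

/-- A matrix and its transpose have the same quadratic form. -/
theorem dotProduct_transpose_mulVec_self {n R : Type*} [Fintype n] [CommSemiring R]
    (P : Matrix n n R) (x : n → R) : x ⬝ᵥ Pᵀ *ᵥ x = x ⬝ᵥ P *ᵥ x := by
  rw [mulVec_transpose, dotProduct_comm, dotProduct_mulVec]

/-- Conjugating the rank-one matrix `(Lᵀx)(Lᵀx)ᵀ` by `L` gives `(LLᵀx)xᵀ`. -/
theorem mul_vecMulVec_transpose_mulVec_mul_inv {n R : Type*} [Fintype n] [DecidableEq n]
    [CommRing R] (L : Matrix n n R) (hL : IsUnit L.det) (x : n → R) :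
    L * vecMulVec (Lᵀ *ᵥ x) (Lᵀ *ᵥ x) * L⁻¹ = vecMulVec ((L * Lᵀ) *ᵥ x) x := by
  rw [mul_vecMulVec, vecMulVec_mul, mulVec_mulVec, mulVec_transpose, vecMul_vecMul,
    mul_nonsing_inv L hL, vecMul_one]

/-- Trace formula for the Mulliken charge. With `S = LLᵀ` positive definite,
`H` symmetric, generalized eigenpairs `H c_i = ε_i S c_i` normalized so that the vectors
`Lᵀ c_i` are orthonormal, and `f(A) = Σ_i f(ε_i) (Lᵀc_i)(Lᵀc_i)ᵀ` for `A = L⁻¹ H L⁻ᵀ`,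
the Mulliken charge associated with an index set `α` satisfies
`(1/2) Σ_i f(ε_i) (c_iᵀ I_α S c_i + c_iᵀ S I_α c_i) = tr(E_αᵀ L f(A) L⁻¹ E_α)`. -/
theorem stmt_10 {M : ℕ}
    (S L H : Matrix (Fin M) (Fin M) ℝ)
    (hSpd : S.PosDef) (hfact : S = L * Lᵀ) (hL : IsUnit L.det)
    (hH : H.IsSymm)
    (A : Matrix (Fin M) (Fin M) ℝ) (hA : A = L⁻¹ * H * Lᵀ⁻¹)
    (c : Fin M → Fin M → ℝ) (ε : Fin M → ℝ)
    (heig : ∀ i, H.mulVec (c i) = ε i • S.mulVec (c i))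
    (horth : ∀ i j, (Lᵀ.mulVec (c i)) ⬝ᵥ (Lᵀ.mulVec (c j)) = if i = j then 1 else 0)
    (f : ℝ → ℝ)
    (fA : Matrix (Fin M) (Fin M) ℝ)
    (hfA : fA = ∑ i, f (ε i) • Matrix.vecMulVec (Lᵀ.mulVec (c i)) (Lᵀ.mulVec (c i)))
    (α : Finset (Fin M))
    (Eα : Matrix (Fin M) {x // x ∈ α} ℝ)
    (hEα : ∀ i a, Eα i a = if i = (a : Fin M) then 1 else 0) :
    (1 / 2 : ℝ) * ∑ i, f (ε i) *
        (c i ⬝ᵥ (Eα * Eαᵀ * S).mulVec (c i) + c i ⬝ᵥ (S * (Eα * Eαᵀ)).mulVec (c i)) =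
      Matrix.trace (Eαᵀ * (L * fA * L⁻¹) * Eα) := by
  have hS : Sᵀ = S := by rw [hfact, transpose_mul, transpose_transpose]
  have hsymm (i : Fin M) :
      c i ⬝ᵥ (S * (Eα * Eαᵀ)) *ᵥ c i = c i ⬝ᵥ (Eα * Eαᵀ * S) *ᵥ c i := by
    rw [← dotProduct_transpose_mulVec_self (Eα * Eαᵀ * S), transpose_mul, hS, transpose_mul,
      transpose_transpose]
  have hconj : L * fA * L⁻¹ = ∑ i, f (ε i) • vecMulVec (S *ᵥ c i) (c i) := by
    simp only [hfA, Matrix.mul_sum, Matrix.sum_mul, Matrix.mul_smul, Matrix.smul_mul,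
      mul_vecMulVec_transpose_mulVec_mul_inv L hL, ← hfact]
  rw [hconj, trace_mul_comm, ← Matrix.mul_assoc Eα, Matrix.mul_sum,
    trace_sum, Finset.mul_sum]
  refine Finset.sum_congr rfl fun i _ => ?_
  rw [hsymm, Matrix.mul_smul, trace_smul, mul_vecMulVec, trace_vecMulVec, mulVec_mulVec,
    dotProduct_comm _ (c i), smul_eq_mul]
  ring
end

section
/- Let m ≥ 2 and let b₁,…,b_m ∈ ℝ satisfy b_i ≥ 0, Σ_{i=1}^m b_i = 1, b₁ > 0 and b_m > 0. Let (e_n)_{n≥1} be a bounded sequence in ℝ^N such that e_{n+m} − Σ_{i=1}^m b_i e_{n+i−1} → 0 as n → ∞, and suppose that for some x ≥ 0, ‖e_{n+m−1}‖₂² + Σ_{j=2}^m ( Σ_{i=1}^{m−j+1} b_i ) ‖e_{n+m−j}‖₂² → x as n → ∞. Then ‖e_n‖₂ converges and lim_{n→∞} ‖e_n‖₂ = sqrt( x / ( 1 + Σ_{j=2}^m Σ_{i=1}^{m−j+1} b_i ) ). -/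
open Filter

/-- Summation by parts for the partial sums of `c`. -/
lemma sum_partialSum_mul_sub (c a : ℕ → ℝ) (M : ℕ) :
    ∑ k ∈ Finset.range M, (∑ i ∈ Finset.range (k + 1), c i) * (a (k + 1) - a k) =
      (∑ i ∈ Finset.range M, c i) * a M - ∑ k ∈ Finset.range M, c k * a k := by
  induction M with
  | zero => simp
  | succ M ih =>
    rw [Finset.sum_range_succ, ih, Finset.sum_range_succ (fun k => c k * a k),
      Finset.sum_range_succ c]
    ring

/-- The variance identity for a weighted mean. -/
lemma sum_mul_norm_sub_sum_smul_sq {ι E : Type*} [NormedAddCommGroup E] [InnerProductSpace ℝ E]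
    (s : Finset ι) (c : ι → ℝ) (v : ι → E) (hc : ∑ i ∈ s, c i = 1) :
    ∑ i ∈ s, c i * ‖v i - ∑ j ∈ s, c j • v j‖ ^ 2 =
      ∑ i ∈ s, c i * ‖v i‖ ^ 2 - ‖∑ j ∈ s, c j • v j‖ ^ 2 := by
  set w := ∑ j ∈ s, c j • v j with hw
  have hinner : ∑ i ∈ s, c i * inner ℝ (v i) w = ‖w‖ ^ 2 := by
    rw [← real_inner_self_eq_norm_sq]
    conv_rhs => rw [hw, sum_inner]
    exact Finset.sum_congr rfl fun i _ => by rw [real_inner_smul_left]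
  calc ∑ i ∈ s, c i * ‖v i - w‖ ^ 2
      = ∑ i ∈ s, (c i * ‖v i‖ ^ 2 - 2 * (c i * inner ℝ (v i) w) + c i * ‖w‖ ^ 2) :=
        Finset.sum_congr rfl fun i _ => by rw [norm_sub_sq_real]; ring
    _ = ∑ i ∈ s, c i * ‖v i‖ ^ 2 - ‖w‖ ^ 2 := by
        rw [Finset.sum_add_distrib, Finset.sum_sub_distrib, ← Finset.mul_sum, hinner,
          ← Finset.sum_mul, hc]
        ring

/-- For bounded sequences, asymptotic equality passes to squared norms. -/
lemma tendsto_norm_sq_sub_norm_sq {E : Type*} [NormedAddCommGroup E] {u v : ℕ → E} {C D : ℝ}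
    (hu : ∀ n, ‖u n‖ ≤ C) (hv : ∀ n, ‖v n‖ ≤ D)
    (h : Tendsto (fun n => u n - v n) atTop (nhds 0)) :
    Tendsto (fun n => ‖u n‖ ^ 2 - ‖v n‖ ^ 2) atTop (nhds 0) := by
  have hlim : Tendsto (fun n => (C + D) * ‖u n - v n‖) atTop (nhds 0) := by
    simpa using h.norm.const_mul (C + D)
  refine squeeze_zero_norm (fun n => ?_) hlim
  have hfac : ‖u n‖ ^ 2 - ‖v n‖ ^ 2 = (‖u n‖ + ‖v n‖) * (‖u n‖ - ‖v n‖) := by ring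
  rw [hfac, norm_mul, Real.norm_eq_abs, Real.norm_eq_abs, abs_of_nonneg (by positivity)]
  exact mul_le_mul (add_le_add (hu n) (hv n)) (abs_norm_sub_norm_le _ _) (abs_nonneg _)
    ((by positivity : 0 ≤ ‖u n‖ + ‖v n‖).trans (add_le_add (hu n) (hv n)))

/-- Under the asymptotic recurrence, convergence of the weighted squared norms forces
consecutive terms to become close. -/
lemma tendsto_succ_sub_of_tendsto_weighted {E : Type*} [NormedAddCommGroup E]
    [InnerProductSpace ℝ E] (p : ℕ) (c : ℕ → ℝ) (hc0 : ∀ i ∈ Finset.range (p + 1), 0 ≤ c i)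
    (hcsum : ∑ i ∈ Finset.range (p + 1), c i = 1) (hcp : 0 < c p)
    (e : ℕ → E) {C : ℝ} (hC : ∀ n, ‖e n‖ ≤ C)
    (hrec : Tendsto (fun n => e (n + (p + 1)) - ∑ i ∈ Finset.range (p + 1), c i • e (n + i))
      atTop (nhds 0)) {x : ℝ}
    (hconv : Tendsto (fun n => ∑ k ∈ Finset.range (p + 1),
      (∑ i ∈ Finset.range (k + 1), c i) * ‖e (n + k)‖ ^ 2) atTop (nhds x)) :
    Tendsto (fun n => e (n + 1) - e n) atTop (nhds 0) := by
  have hmean : ∀ n, ‖∑ i ∈ Finset.range (p + 1), c i • e (n + i)‖ ≤ C := fun n => by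
    refine (norm_sum_le _ _).trans ?_
    calc ∑ i ∈ Finset.range (p + 1), ‖c i • e (n + i)‖
        ≤ ∑ i ∈ Finset.range (p + 1), c i * C := Finset.sum_le_sum fun i hi => by
          rw [norm_smul, Real.norm_of_nonneg (hc0 i hi)]
          exact mul_le_mul_of_nonneg_left (hC _) (hc0 i hi)
      _ = C := by rw [← Finset.sum_mul, hcsum, one_mul]
  have hstep := (hconv.comp (tendsto_add_atTop_nat 1)).sub hconv
  have hsq := tendsto_norm_sq_sub_norm_sq (fun n => hC (n + (p + 1))) hmean hrec
  have hvar : Tendsto (fun n => ∑ i ∈ Finset.range (p + 1),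
      c i * ‖e (n + i) - ∑ j ∈ Finset.range (p + 1), c j • e (n + j)‖ ^ 2) atTop (nhds 0) := by
    have hdiff := hsq.sub hstep
    rw [sub_self, sub_zero] at hdiff
    refine hdiff.congr fun n => ?_
    rw [sum_mul_norm_sub_sum_smul_sq _ c (fun i => e (n + i)) hcsum]
    have hparts := sum_partialSum_mul_sub c (fun k => ‖e (n + k)‖ ^ 2) (p + 1)
    simp only [hcsum, one_mul, mul_sub, Finset.sum_sub_distrib] at hparts
    simp only [Function.comp_apply, add_assoc, add_comm 1]
    linarith
  have hlast : Tendsto (fun n => ‖e (n + p) - ∑ j ∈ Finset.range (p + 1), c j • e (n + j)‖ ^ 2)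
      atTop (nhds 0) := by
    have hlim := hvar.const_mul (c p)⁻¹
    rw [mul_zero] at hlim
    refine squeeze_zero (fun n => by positivity) (fun n => ?_) hlim
    rw [le_inv_mul_iff₀ hcp]
    exact Finset.single_le_sum
      (f := fun i => c i * ‖e (n + i) - ∑ j ∈ Finset.range (p + 1), c j • e (n + j)‖ ^ 2)
      (fun i hi => mul_nonneg (hc0 i hi) (by positivity)) (Finset.self_mem_range_succ p)
  have hlast' : Tendsto (fun n => e (n + p) - ∑ j ∈ Finset.range (p + 1), c j • e (n + j))
      atTop (nhds 0) := by
    rw [tendsto_zero_iff_norm_tendsto_zero]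
    simpa [Real.sqrt_sq] using hlast.sqrt
  rw [← tendsto_add_atTop_iff_nat p]
  have hdiff := hrec.sub hlast'
  rw [sub_zero] at hdiff
  exact hdiff.congr fun n => by rw [sub_sub_sub_cancel_right, add_assoc]

/-- If consecutive terms of `a` become close and a weighted sliding sum of `a` converges, then `a`
converges to the normalized limit. -/
lemma tendsto_of_tendsto_sliding_sum {a : ℕ → ℝ}
    (ha : Tendsto (fun n => a (n + 1) - a n) atTop (nhds 0)) (M : ℕ) (w : ℕ → ℝ)
    (hw : ∑ k ∈ Finset.range M, w k ≠ 0) {x : ℝ}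
    (h : Tendsto (fun n => ∑ k ∈ Finset.range M, w k * a (n + k)) atTop (nhds x)) :
    Tendsto a atTop (nhds (x / ∑ k ∈ Finset.range M, w k)) := by
  have hshift : ∀ k, Tendsto (fun n => a (n + k) - a n) atTop (nhds 0) := fun k => by
    induction k with
    | zero => simp
    | succ k ih =>
      have hsum := (ha.comp (tendsto_add_atTop_nat k)).add ih
      rw [add_zero] at hsum
      exact hsum.congr fun n => by simp [add_assoc]
  have herr : Tendsto (fun n => ∑ k ∈ Finset.range M, w k * (a (n + k) - a n))
      atTop (nhds 0) := by
    simpa using tendsto_finsetSum (Finset.range M) fun k _ => (hshift k).const_mul (w k)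
  have hdiv := (h.sub herr).div_const (∑ k ∈ Finset.range M, w k)
  rw [sub_zero] at hdiv
  refine hdiv.congr fun n => ?_
  rw [← Finset.sum_sub_distrib, div_eq_iff hw, Finset.mul_sum]
  exact Finset.sum_congr rfl fun k _ => by ring

lemma sum_Icc_one_eq_sum_range {M : Type*} [AddCommMonoid M] (f : ℕ → M) (n : ℕ) :
    ∑ i ∈ Finset.Icc 1 n, f i = ∑ i ∈ Finset.range n, f (i + 1) := by
  rw [Finset.range_eq_Ico, Finset.sum_Ico_add' f 0 n 1]
  rfl

lemma sum_Icc_two_reflect {M : Type*} [AddCommMonoid M] (f : ℕ → M) (p : ℕ) :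
    ∑ j ∈ Finset.Icc 2 (p + 1), f (p + 1 - j) = ∑ k ∈ Finset.range p, f k := by
  refine Finset.sum_nbij' (fun j => p + 1 - j) (fun k => p + 1 - k) ?_ ?_ ?_ ?_ ?_ <;>
    simp only [Finset.mem_Icc, Finset.mem_range] <;> intros <;> first | omega | trivial

/-- For a bounded sequence `(e_n)` in `ℝ^N` satisfying the asymptotic mixing
recurrence `e_{n+m} − Σ_{i=1}^m b_i e_{n+i−1} → 0` and such that the weighted combination
`‖e_{n+m−1}‖² + Σ_{j=2}^m (Σ_{i=1}^{m−j+1} b_i) ‖e_{n+m−j}‖²` converges to `x`, the norms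
`‖e_n‖` converge to `sqrt (x / (1 + Σ_{j=2}^m Σ_{i=1}^{m−j+1} b_i))`. -/
theorem stmt_15 {N : ℕ} (m : ℕ) (hm : 2 ≤ m) (b : ℕ → ℝ)
    (hb0 : ∀ i ∈ Finset.Icc 1 m, 0 ≤ b i)
    (hbsum : ∑ i ∈ Finset.Icc 1 m, b i = 1)
    (hb1 : 0 < b 1) (hbm : 0 < b m)
    (e : ℕ → EuclideanSpace ℝ (Fin N))
    (hbdd : ∃ C : ℝ, ∀ n, ‖e n‖ ≤ C)
    (hrec : Tendsto (fun n => e (n + m) - ∑ i ∈ Finset.Icc 1 m, b i • e (n + i - 1))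
      atTop (nhds 0))
    (x : ℝ) (hx : 0 ≤ x)
    (hconv : Tendsto
      (fun n => ‖e (n + m - 1)‖ ^ 2 +
        ∑ j ∈ Finset.Icc 2 m, (∑ i ∈ Finset.Icc 1 (m - j + 1), b i) * ‖e (n + m - j)‖ ^ 2)
      atTop (nhds x)) :
    Tendsto (fun n => ‖e n‖) atTop
      (nhds (Real.sqrt (x / (1 + ∑ j ∈ Finset.Icc 2 m, ∑ i ∈ Finset.Icc 1 (m - j + 1), b i)))) := by
  obtain ⟨p, rfl⟩ : ∃ p, m = p + 1 := ⟨m - 1, by omega⟩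
  obtain ⟨C, hC⟩ := hbdd
  rw [sum_Icc_one_eq_sum_range] at hbsum
  have hb0' : ∀ i ∈ Finset.range (p + 1), 0 ≤ b (i + 1) := fun i hi =>
    hb0 (i + 1) (by simp only [Finset.mem_Icc, Finset.mem_range] at *; omega)
  have hden : 1 + ∑ j ∈ Finset.Icc 2 (p + 1), ∑ i ∈ Finset.Icc 1 (p + 1 - j + 1), b i =
      ∑ k ∈ Finset.range (p + 1), ∑ i ∈ Finset.range (k + 1), b (i + 1) := by
    rw [Finset.sum_range_succ, hbsum, add_comm,
      sum_Icc_two_reflect (fun k => ∑ i ∈ Finset.Icc 1 (k + 1), b i)]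
    simp only [sum_Icc_one_eq_sum_range]
  have hpos : 0 < ∑ k ∈ Finset.range (p + 1), ∑ i ∈ Finset.range (k + 1), b (i + 1) := by
    rw [Finset.sum_range_succ, hbsum]
    refine add_pos_of_nonneg_of_pos (Finset.sum_nonneg fun k hk => Finset.sum_nonneg fun i hi =>
      hb0' i ?_) one_pos
    simp only [Finset.mem_range] at *
    omega
  have hrec' : Tendsto (fun n => e (n + (p + 1)) -
      ∑ i ∈ Finset.range (p + 1), b (i + 1) • e (n + i)) atTop (nhds 0) :=
    hrec.congr fun n => by rw [sum_Icc_one_eq_sum_range]; rfl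
  have hconv' : Tendsto (fun n => ∑ k ∈ Finset.range (p + 1),
      (∑ i ∈ Finset.range (k + 1), b (i + 1)) * ‖e (n + k)‖ ^ 2) atTop (nhds x) := by
    refine hconv.congr fun n => ?_
    rw [Finset.sum_range_succ, hbsum, one_mul, add_comm, ← sum_Icc_two_reflect]
    refine congrArg₂ _ (Finset.sum_congr rfl fun j hj => ?_) rfl
    rw [sum_Icc_one_eq_sum_range, Nat.add_sub_assoc (Finset.mem_Icc.mp hj).2]
  have hsucc := tendsto_succ_sub_of_tendsto_weighted p (fun i => b (i + 1)) hb0' hbsum hbm e hC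
    hrec' hconv'
  have hsq := tendsto_of_tendsto_sliding_sum (a := fun n => ‖e n‖ ^ 2)
    (tendsto_norm_sq_sub_norm_sq (fun n => hC (n + 1)) hC hsucc) (p + 1) _ hpos.ne' hconv'
  rw [hden]
  simpa [Real.sqrt_sq] using hsq.sqrt
end
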